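/- arXiv:2410.09873 — 3 statements merged into one kernel-verified Lean document; each statement's English description precedes it below -/
import Mathlib

section
/- (Two-step skipping total error bound.) Under the setup of the two-step skipping trajectories, i.e., skipped trajectory x_{i-1} = f(i−1) • x_i − g(i−1) • ε x_{i+1} t_{i+1}, x_{i-2} = f(i−2) • x_{i-1} − g(i−2) • ε x_{i+1} t_{i+1}, and original trajectory x_{i-1}^{ori} = f(i−1) • x_i − g(i−1) • ε x_i t_i, x_{i-2}^{ori} = f(i−2) • x_{i-1}^{ori} − g(i−2) • ε x_{i-1}^{ori} t_{i-1}, with ε Lipschitz with constants L₁ (first argument) and L₂ (second argument), the two-step skipping error satisfies ‖x_{i-2} − x_{i-2}^{ori}‖ ≤ (|f(i−2)|·|g(i−1)| + |g(i−2)|) · (L₁ · ‖x_i − x_{i+1}‖ + L₂ · |t_i − t_{i+1}|) + |g(i−2)| · (L₁ · ‖x_{i-1}^{ori} − x_i‖ + L₂ · |t_{i-1} − t_i|). In particular, the error of continuously skipping two steps is upper-bounded by an accumulation of first-order differences of consecutive latents and timesteps. -/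
open scoped NNReal

/-- Two-step skipping total error bound: the error of continuously skipping two
noise-prediction steps is bounded by an accumulation of first-order differences
of consecutive latents and timesteps. -/
theorem two_step_skipping_total_error {E : Type*} [NormedAddCommGroup E] [NormedSpace ℝ E]
    (ε : E → ℝ → E) (L₁ L₂ : ℝ≥0)
    (hL₁ : ∀ t : ℝ, LipschitzWith L₁ (fun x => ε x t))
    (hL₂ : ∀ x : E, LipschitzWith L₂ (fun t => ε x t))
    (f g : ℤ → ℝ) (t : ℤ → ℝ) (i : ℤ)
    (xip1 xi xim1 xim2 xim1_ori xim2_ori : E)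
    (h_skip1 : xim1 = f (i - 1) • xi - g (i - 1) • ε xip1 (t (i + 1)))
    (h_skip2 : xim2 = f (i - 2) • xim1 - g (i - 2) • ε xip1 (t (i + 1)))
    (h_ori1 : xim1_ori = f (i - 1) • xi - g (i - 1) • ε xi (t i))
    (h_ori2 : xim2_ori = f (i - 2) • xim1_ori - g (i - 2) • ε xim1_ori (t (i - 1))) :
    ‖xim2 - xim2_ori‖ ≤
      (|f (i - 2)| * |g (i - 1)| + |g (i - 2)|) *
          ((L₁ : ℝ) * ‖xi - xip1‖ + (L₂ : ℝ) * |t i - t (i + 1)|)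
        + |g (i - 2)| * ((L₁ : ℝ) * ‖xim1_ori - xi‖ + (L₂ : ℝ) * |t (i - 1) - t i|) := by
  have key : ∀ (x y : E) (a b : ℝ),
      ‖ε x a - ε y b‖ ≤ (L₁ : ℝ) * ‖x - y‖ + (L₂ : ℝ) * |a - b| := by
    intro x y a b
    have h1 := (hL₁ a).dist_le_mul x y
    have h2 := (hL₂ y).dist_le_mul a b
    simp only [dist_eq_norm, Real.norm_eq_abs] at h1 h2
    have h3 := norm_add_le (ε x a - ε y a) (ε y a - ε y b)
    rw [sub_add_sub_cancel] at h3
    linarith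
  have hA := key xi xip1 (t i) (t (i + 1))
  have hB := key xim1_ori xi (t (i - 1)) (t i)
  have e : xim2 - xim2_ori =
      (f (i - 2) * g (i - 1) + g (i - 2)) • (ε xi (t i) - ε xip1 (t (i + 1)))
        + g (i - 2) • (ε xim1_ori (t (i - 1)) - ε xi (t i)) := by
    have e1 : xim1 = xim1_ori + g (i - 1) • (ε xi (t i) - ε xip1 (t (i + 1))) := by
      rw [h_skip1, h_ori1]; module
    rw [h_skip2, h_ori2, e1]; module
  rw [e]
  refine (norm_add_le _ _).trans ?_
  rw [norm_smul, norm_smul, Real.norm_eq_abs, Real.norm_eq_abs]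
  have h : |f (i - 2) * g (i - 1) + g (i - 2)| ≤ |f (i - 2)| * |g (i - 1)| + |g (i - 2)| := by
    rw [← abs_mul]; exact abs_add_le _ _
  gcongr
end

section
/- (Closed-form upper bound for the k-step skipping error.) Let E be a real normed vector space, ε : E → ℝ → E with Lipschitz constants L₁ (first argument, uniformly in t) and L₂ (second argument, uniformly in x), f, g : ℤ → ℝ, t : ℤ → ℝ. Fix x_{i+1} ∈ E and k ≥ 1, and define the skipped trajectory x_i = f(i) • x_{i+1} − g(i) • ε x_{i+1} t_{i+1}, x_{i-m} = f(i−m) • x_{i-m+1} − g(i−m) • ε x_{i+1} t_{i+1} for 1 ≤ m ≤ k, and the original trajectory y_{i+1} = x_{i+1}, y_{i-m} = f(i−m) • y_{i-m+1} − g(i−m) • ε y_{i-m+1} t_{i-m+1} for 0 ≤ m ≤ k (so y_i = x_i). Then ‖x_{i-k} − y_{i-k}‖ ≤ Σ_{m=1}^{k} h(k, m) · ( L₁ · ‖x_{i+1} − y_{i-m+1}‖ + L₂ · |t_{i+1} − t_{i-m+1}| ), where h(k, m) := |g(i−m)| · ∏_{j=1}^{k−m} |f(i−m−j)| (with the empty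 product equal to 1 when m = k). -/
open scoped NNReal
open Finset

/-- Closed-form upper bound for the k-step skipping error:
`‖x_{i-k} − y_{i-k}‖ ≤ Σ_{m=1}^{k} h(k,m) (L₁ ‖x_{i+1} − y_{i-m+1}‖ + L₂ |t_{i+1} − t_{i-m+1}|)`
where `h(k,m) = |g(i−m)| ∏_{j=1}^{k−m} |f(i−m−j)|`. -/
theorem k_step_skipping_closed_form_bound {E : Type*} [NormedAddCommGroup E] [NormedSpace ℝ E]
    (ε : E → ℝ → E) (L₁ L₂ : ℝ≥0)
    (hL₁ : ∀ t : ℝ, LipschitzWith L₁ (fun x => ε x t))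
    (hL₂ : ∀ x : E, LipschitzWith L₂ (fun t => ε x t))
    (f g : ℤ → ℝ) (t : ℤ → ℝ) (i : ℤ) (k : ℕ) (hk : 1 ≤ k)
    (x y : ℤ → E)
    (hx0 : x i = f i • x (i + 1) - g i • ε (x (i + 1)) (t (i + 1)))
    (hx : ∀ m : ℕ, 1 ≤ m → m ≤ k →
      x (i - m) = f (i - m) • x (i - m + 1) - g (i - m) • ε (x (i + 1)) (t (i + 1)))
    (hy0 : y (i + 1) = x (i + 1))
    (hy : ∀ m : ℕ, m ≤ k →
      y (i - m) = f (i - m) • y (i - m + 1) - g (i - m) • ε (y (i - m + 1)) (t (i - m + 1))) :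
    ‖x (i - k) - y (i - k)‖ ≤
      ∑ m ∈ Finset.Icc 1 k,
        (|g (i - m)| * ∏ j ∈ Finset.Icc 1 (k - m), |f (i - m - j)|) *
          ((L₁ : ℝ) * ‖x (i + 1) - y (i - m + 1)‖ + (L₂ : ℝ) * |t (i + 1) - t (i - m + 1)|) := by
  have key : ∀ n : ℕ, n ≤ k → ‖x (i - n) - y (i - n)‖ ≤
      ∑ m ∈ Finset.Icc 1 n,
        (|g (i - m)| * ∏ j ∈ Finset.Icc 1 (n - m), |f (i - m - j)|) *
          ((L₁ : ℝ) * ‖x (i + 1) - y (i - m + 1)‖ +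
            (L₂ : ℝ) * |t (i + 1) - t (i - m + 1)|) := by
    intro n
    induction n with
    | zero =>
      intro _
      have h := hy 0 (Nat.zero_le _)
      simp only [Nat.cast_zero, sub_zero] at h ⊢
      rw [hx0, h, hy0]
      simp
    | succ n ih =>
      intro hn
      have ih' := ih (by omega)
      have e : i - ((n + 1 : ℕ) : ℤ) + 1 = i - (n : ℤ) := by push_cast; ring
      have hX := hx (n + 1) (by omega) hn
      have hY := hy (n + 1) hn
      rw [Finset.sum_Icc_succ_top (by omega)]
      have hsum : ∑ m ∈ Finset.Icc 1 n,
          (|g (i - m)| * ∏ j ∈ Finset.Icc 1 (n + 1 - m), |f (i - m - j)|) *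
          ((L₁ : ℝ) * ‖x (i + 1) - y (i - m + 1)‖ +
            (L₂ : ℝ) * |t (i + 1) - t (i - m + 1)|)
          = |f (i - ((n + 1 : ℕ) : ℤ))| * ∑ m ∈ Finset.Icc 1 n,
          (|g (i - m)| * ∏ j ∈ Finset.Icc 1 (n - m), |f (i - m - j)|) *
          ((L₁ : ℝ) * ‖x (i + 1) - y (i - m + 1)‖ +
            (L₂ : ℝ) * |t (i + 1) - t (i - m + 1)|) := by
        rw [Finset.mul_sum]
        refine Finset.sum_congr rfl fun m hm => ?_
        have hm2 := (Finset.mem_Icc.mp hm).2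
        have e1 : n + 1 - m = (n - m) + 1 := by omega
        rw [e1, Finset.prod_Icc_succ_top (by omega)]
        have e2 : i - (m : ℤ) - ((n - m + 1 : ℕ) : ℤ) = i - ((n + 1 : ℕ) : ℤ) := by omega
        rw [e2]
        ring
      rw [hsum, hX, hY, e]
      have hε : ‖ε (x (i + 1)) (t (i + 1)) - ε (y (i - n)) (t (i - n))‖ ≤
          (L₁ : ℝ) * ‖x (i + 1) - y (i - n)‖ + (L₂ : ℝ) * |t (i + 1) - t (i - n)| := by
        have h1 := (hL₁ (t (i + 1))).dist_le_mul (x (i + 1)) (y (i - n))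
        have h2 := (hL₂ (y (i - n))).dist_le_mul (t (i + 1)) (t (i - n))
        simp only [dist_eq_norm, Real.norm_eq_abs] at h1 h2
        exact (norm_sub_le_norm_sub_add_norm_sub _ (ε (y (i - n)) (t (i + 1))) _).trans
          (add_le_add h1 h2)
      have hd : f (i - ((n + 1 : ℕ) : ℤ)) • x (i - n)
            - g (i - ((n + 1 : ℕ) : ℤ)) • ε (x (i + 1)) (t (i + 1))
          - (f (i - ((n + 1 : ℕ) : ℤ)) • y (i - n)
            - g (i - ((n + 1 : ℕ) : ℤ)) • ε (y (i - n)) (t (i - n)))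
          = f (i - ((n + 1 : ℕ) : ℤ)) • (x (i - n) - y (i - n))
            - g (i - ((n + 1 : ℕ) : ℤ)) •
              (ε (x (i + 1)) (t (i + 1)) - ε (y (i - n)) (t (i - n))) := by
        simp only [smul_sub]; abel
      rw [hd]
      refine (norm_sub_le _ _).trans ?_
      rw [norm_smul, norm_smul, Real.norm_eq_abs, Real.norm_eq_abs]
      refine add_le_add (mul_le_mul_of_nonneg_left ih' (abs_nonneg _)) ?_
      simpa using mul_le_mul_of_nonneg_left hε (abs_nonneg (g (i - ((n + 1 : ℕ) : ℤ))))
  exact key k le_rfl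
end

section
/- (Stability of consecutive noise predictions from a small third-order latent difference, constant-coefficient case.) Let E be a real normed vector space, ε : E → ℝ → E, t : ℤ → ℝ, c ∈ ℝ with c ≠ 0, and let x : ℤ → E satisfy x_{j-1} = x_j − c • ε x_j t_j for all relevant j. Write Δx_j := x_j − x_{j+1}, ε_j := ε x_j t_j, and Δ³x_{i-1} := Δx_{i-1} − 2 • Δx_i + Δx_{i+1}. Then for every i, ‖ε_i − ε_{i+1}‖ ≤ ‖ε_{i+1} − ε_{i+2}‖ + ‖Δ³x_{i-1}‖ / |c|. Consequently, if the previous noise predictions changed little and the third-order latent difference is small, the next first difference of noise predictions is small — justifying the reuse of the cached noise prediction. -/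
/-- Stability of consecutive noise predictions from a small third-order latent
difference (constant-coefficient case): `‖ε_i − ε_{i+1}‖ ≤ ‖ε_{i+1} − ε_{i+2}‖ + ‖Δ³x_{i-1}‖/|c|`. -/
theorem noise_prediction_stability_constant_coeff {E : Type*}
    [NormedAddCommGroup E] [NormedSpace ℝ E]
    (ε : E → ℝ → E) (t : ℤ → ℝ) (c : ℝ) (hc : c ≠ 0) (x : ℤ → E)
    (hx : ∀ j : ℤ, x (j - 1) = x j - c • ε (x j) (t j)) :
    ∀ i : ℤ,
      ‖ε (x i) (t i) - ε (x (i + 1)) (t (i + 1))‖ ≤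
        ‖ε (x (i + 1)) (t (i + 1)) - ε (x (i + 2)) (t (i + 2))‖
          + ‖(x (i - 1) - x i) - (2 : ℝ) • (x i - x (i + 1)) + (x (i + 1) - x (i + 2))‖ / |c| := by
  intro i
  have h0 : x (i - 1) - x i = -(c • ε (x i) (t i)) := by
    rw [hx i]; abel
  have h1 : x i - x (i + 1) = -(c • ε (x (i + 1)) (t (i + 1))) := by
    have h := hx (i + 1)
    rw [show i + 1 - 1 = i by ring] at h
    rw [sub_eq_iff_eq_add, h]; abel
  have h2 : x (i + 1) - x (i + 2) = -(c • ε (x (i + 2)) (t (i + 2))) := by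
    have h := hx (i + 2)
    rw [show i + 2 - 1 = i + 1 by ring] at h
    rw [sub_eq_iff_eq_add, h]; abel
  rw [h0, h1, h2]
  generalize ε (x i) (t i) = a
  generalize ε (x (i + 1)) (t (i + 1)) = b
  generalize ε (x (i + 2)) (t (i + 2)) = d
  have h3 : -(c • a) - (2 : ℝ) • -(c • b) + -(c • d) = (-c) • (a - (2 : ℝ) • b + d) := by
    module
  rw [h3, norm_smul, norm_neg, Real.norm_eq_abs, mul_div_cancel_left₀ _ (abs_ne_zero.mpr hc)]
  have h4 : a - b = (b - d) + (a - (2 : ℝ) • b + d) := by module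
  rw [h4]
  exact norm_add_le _ _
end
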